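/- Let A = B + C be a factorization of a skew left brace A through left ideals B and C. If B and C are both trivial as skew left braces, then Fix(A) is a factorized left ideal of A, i.e., Fix(A) = (Fix(A) ∩ B) + (Fix(A) ∩ C). -/

import Mathlib

/-- A skew left brace: `(A,+)` and `(A,∘)` are groups (sharing the same identity `0`)
such that `a ∘ (b + c) = a ∘ b - a + a ∘ c`.  Here `circ` is the operation `∘` and
`cinv a` is the inverse of `a` in `(A,∘)`. -/
class SkewBrace (A : Type*) extends AddGroup A where
  circ : A → A → A
  cinv : A → A
  circ_assoc : ∀ a b c : A, circ (circ a b) c = circ a (circ b c)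
  zero_circ : ∀ a : A, circ 0 a = a
  circ_zero : ∀ a : A, circ a 0 = a
  cinv_circ : ∀ a : A, circ (cinv a) a = 0
  circ_cinv : ∀ a : A, circ a (cinv a) = 0
  compat : ∀ a b c : A, circ a (b + c) = circ a b + -a + circ a c

open SkewBrace

/-- `lam a b = -a + a ∘ b`. -/
def lam {A : Type*} [SkewBrace A] (a b : A) : A := -a + circ a b

/-- The star operation `a * b = lam a b - b = -a + a ∘ b - b`. -/
def bstar {A : Type*} [SkewBrace A] (a b : A) : A := lam a b - b

/-- `X * Y`: the subgroup of `(A,+)` generated by `{x * y : x ∈ X, y ∈ Y}`. -/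
def starSpan {A : Type*} [SkewBrace A] (X Y : Set A) : AddSubgroup A :=
  AddSubgroup.closure {z | ∃ x ∈ X, ∃ y ∈ Y, z = bstar x y}

/-- The right series of `st`: `rseriesOf st 0 = A = A^(1)` and
`rseriesOf st n = A^(n+1)`, so that `A^(n+1) = A^(n) * A`. -/
def rseriesOf {G : Type*} [AddGroup G] (st : G → G → G) : ℕ → AddSubgroup G
  | 0 => ⊤
  | n + 1 => AddSubgroup.closure {z | ∃ u ∈ rseriesOf st n, ∃ a : G, z = st u a}

theorem lam_add' {A : Type*} [SkewBrace A] (a x y : A) :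
    lam a (x + y) = lam a x + lam a y := by
  simp only [lam, compat, add_assoc]

theorem circ_eq' {A : Type*} [SkewBrace A] (a x : A) : circ a x = a + lam a x := by
  simp [lam]

theorem lam_circ' {A : Type*} [SkewBrace A] (a b x : A) :
    lam (circ a b) x = lam a (lam b x) := by
  have h : circ a (circ b x) = a + (lam a b + lam a (lam b x)) := by
    rw [← lam_add', ← circ_eq', ← circ_eq']
  have h2 : circ (circ a b) x = circ a b + lam a (lam b x) := by
    rw [circ_assoc, h, circ_eq' a b, add_assoc]
  rw [circ_eq' (circ a b) x] at h2
  exact add_left_cancel h2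

theorem lam_zero' {A : Type*} [SkewBrace A] (x : A) : lam 0 x = x := by
  simp [lam, zero_circ]

/-- if `A = B + C` through left ideals trivial as skew braces, then
`Fix(A) = {a | lam b a = a for all b}` is factorized:
`Fix(A) = (Fix(A) ∩ B) + (Fix(A) ∩ C)`. -/
theorem stmt13 {A : Type*} [SkewBrace A] (B C : AddSubgroup A)
    (hB : ∀ a : A, ∀ x ∈ B, lam a x ∈ B)
    (hC : ∀ a : A, ∀ x ∈ C, lam a x ∈ C)
    (hBtriv : ∀ x ∈ B, ∀ y ∈ B, x + y = circ x y)
    (hCtriv : ∀ x ∈ C, ∀ y ∈ C, x + y = circ x y)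
    (hfact : ∀ a : A, ∃ b ∈ B, ∃ c ∈ C, a = b + c) :
    {a : A | ∀ b : A, lam b a = a} =
      {t : A | ∃ x ∈ {a : A | ∀ b : A, lam b a = a} ∩ (B : Set A),
               ∃ y ∈ {a : A | ∀ b : A, lam b a = a} ∩ (C : Set A), t = x + y} := by
  ext t
  simp only [Set.mem_setOf_eq, Set.mem_inter_iff, SetLike.mem_coe]
  constructor
  · intro ht
    obtain ⟨b, hb, c, hc, rfl⟩ := hfact t
    have hcB : ∀ x ∈ B, lam x c = c := by
      intro x hx
      have h1 := ht x
      have h2 : lam x b = b := by simp [lam, ← hBtriv x hx b hb]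
      rw [lam_add', h2] at h1
      exact add_left_cancel h1
    have hcC : ∀ x ∈ C, lam x c = c := by
      intro x hx
      simp [lam, ← hCtriv x hx c hc]
    have hcF : ∀ a : A, lam a c = c := by
      intro a
      obtain ⟨x, hx, y, hy, rfl⟩ := hfact a
      have e : x + y = circ x (lam (cinv x) y) := by
        rw [circ_eq', ← lam_circ', circ_cinv, lam_zero']
      rw [e, lam_circ', hcC _ (hC _ _ hy), hcB x hx]
    refine ⟨b, ⟨?_, hb⟩, c, ⟨hcF, hc⟩, rfl⟩
    intro a
    have h1 := ht a
    rw [lam_add', hcF a] at h1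
    exact add_right_cancel h1
  · rintro ⟨x, ⟨hx, -⟩, y, ⟨hy, -⟩, rfl⟩ a
    rw [lam_add', hx, hy]
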